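/- Let q be an odd prime power and F_q the finite field with q elements. There exist constants C > 0 and c > 0 such that the following holds: if E ⊆ F_q² and ρ is a real number with C/√q ≤ ρ ≤ 1 and |E| ≥ ρq², then |T₃(E)| > cρq³, where T₃(E) is the set of equivalence classes of triples (x,y,z) ∈ E × E × E under the equivalence relation (x,y,z) ∼ (x',y',z') iff there exist τ ∈ F_q² and O ∈ SO₂(F_q) (a 2×2 matrix over F_q with OᵀO = I and det O = 1) such that (x',y',z') = (Ox + τ, Oy + τ, Oz + τ). -/

import Mathlib

open Matrix

/-- The equivalence relation on triples: `(x,y,z) ∼ (x',y',z')` iff there exist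
`τ ∈ F_q²` and `O ∈ SO₂(F_q)` with `(x',y',z') = (Ox + τ, Oy + τ, Oz + τ)`. -/
def triangleRel (F : Type) [Field F]
    (t t' : (Fin 2 → F) × (Fin 2 → F) × (Fin 2 → F)) : Prop :=
  ∃ (τ : Fin 2 → F) (O : Matrix (Fin 2) (Fin 2) F),
    Oᵀ * O = 1 ∧ O.det = 1 ∧
    t'.1 = O.mulVec t.1 + τ ∧ t'.2.1 = O.mulVec t.2.1 + τ ∧
    t'.2.2 = O.mulVec t.2.2 + τ

/-!
Bisectors of distinct points are lines, so a point `x` of the plane is equidistant from two given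
points with probability `1 / q`: the functions `y ↦ ‖x - y‖²` form a universal hash family. Hence,
averaging over `x ∈ E`, some `x ∈ E` has at most `|E|² / q + q²` pairs `(y, z) ∈ E × E` with
`‖x - y‖² = ‖x - z‖²`, and by Cauchy–Schwarz it sees a positive proportion of all distances
once `|E|² ≥ 4q³`. For each nonzero distance `s` fix `y ∈ E` with `‖x - y‖² = s`. The triangles
`(x, y, z)` with `z ∈ E` are pairwise inequivalent, because dot product and determinant with
`y - x` determine `z - x`. This yields about `q |E| ≥ ρ q³` classes.
-/

open Finset

section Collisions

variable {α β Ω : Type*} [DecidableEq β]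

/-- The ordered pairs of elements of `s` with the same image under `f`, including the diagonal
pairs. Their number is the second moment of the fiber sizes of `f` on `s`. -/
def collisions (f : α → β) (s : Finset α) : Finset (α × α) := {p ∈ s ×ˢ s | f p.1 = f p.2}

lemma card_collisions_eq_sum_sq (f : α → β) (s : Finset α) :
    #(collisions f s) = ∑ b ∈ s.image f, #{a ∈ s | f a = b} ^ 2 := by
  have hmaps : Set.MapsTo (fun p : α × α ↦ f p.1) (collisions f s) (s.image f) := by
    intro p hp
    exact mem_image_of_mem f (mem_product.mp (mem_filter.mp hp).1).1
  rw [card_eq_sum_card_fiberwise hmaps]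
  refine sum_congr rfl fun b _ ↦ ?_
  rw [sq, ← card_product]
  congr 1
  ext p
  simp only [collisions, mem_filter, mem_product]
  grind

lemma card_sq_le_card_image_mul_card_collisions (f : α → β) (s : Finset α) :
    #s ^ 2 ≤ #(s.image f) * #(collisions f s) := by
  rw [card_collisions_eq_sum_sq, card_eq_sum_card_image f s]
  exact sq_sum_le_card_mul_sum_sq

lemma card_sq_le_card_mul_card_collisions [Fintype β] (f : α → β) (s : Finset α) :
    #s ^ 2 ≤ Fintype.card β * #(collisions f s) :=
  (card_sq_le_card_image_mul_card_collisions f s).trans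
    (Nat.mul_le_mul_right _ (card_le_univ _))

variable [Fintype β] [Fintype Ω]

/-- The functions `f x`, for `x` in the finite probability space `Ω`, form a universal hash family
on `s`: two distinct elements of `s` collide with probability at most `1 / card β`. The inequality
is multiplied out to stay in `ℕ`. -/
def IsUniversalHash (f : Ω → α → β) (s : Set α) : Prop :=
  s.Pairwise fun y z ↦ Fintype.card β * #{x | f x y = f x z} ≤ Fintype.card Ω

variable {f : Ω → α → β} {s : Finset α}

lemma sum_card_collisions_le (hf : IsUniversalHash f s) :
    Fintype.card β * ∑ x, #(collisions (f x) s) ≤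
      Fintype.card β * #s * Fintype.card Ω + Fintype.card Ω * #s ^ 2 := by
  classical
  have swap : ∑ x, #(collisions (f x) s) = ∑ p ∈ s ×ˢ s, #{x | f x p.1 = f x p.2} :=
    sum_card_bipartiteAbove_eq_sum_card_bipartiteBelow fun x (p : α × α) ↦ f x p.1 = f x p.2
  have diagonal : ∑ p ∈ s.diag, #{x | f x p.1 = f x p.2} = #s * Fintype.card Ω := by
    simp [sum_diag]
  have offDiagonal : Fintype.card β * ∑ p ∈ s.offDiag, #{x | f x p.1 = f x p.2} ≤
      Fintype.card Ω * #s ^ 2 := by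
    calc Fintype.card β * ∑ p ∈ s.offDiag, #{x | f x p.1 = f x p.2}
      _ ≤ #s.offDiag • Fintype.card Ω := by
        rw [mul_sum]
        refine sum_le_card_nsmul _ _ _ fun p hp ↦ ?_
        obtain ⟨hy, hz, hne⟩ := mem_offDiag.mp hp
        exact hf hy hz hne
      _ ≤ Fintype.card Ω * #s ^ 2 := by
        rw [smul_eq_mul, mul_comm, offDiag_card, ← sq]
        exact Nat.mul_le_mul_left _ (Nat.sub_le _ _)
  rw [swap, ← diag_union_offDiag, sum_union (disjoint_diag_offDiag s), diagonal, mul_add,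
    ← mul_assoc]
  exact Nat.add_le_add_left offDiagonal _

/-- By Cauchy–Schwarz no single `x` has fewer than `#s ^ 2 / card β` collisions, so the excess over
this value is nonnegative and its sum over `t` is at most its sum over all of `Ω`. -/
lemma sum_subset_card_collisions_le (hf : IsUniversalHash f s) (t : Finset Ω) :
    Fintype.card β * ∑ x ∈ t, #(collisions (f x) s) ≤
      Fintype.card β * #s * Fintype.card Ω + #t * #s ^ 2 := by
  classical
  have outside : #tᶜ * #s ^ 2 ≤ Fintype.card β * ∑ x ∈ tᶜ, #(collisions (f x) s) := by
    rw [mul_sum, ← smul_eq_mul]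
    exact card_nsmul_le_sum _ _ _ fun x _ ↦ card_sq_le_card_mul_card_collisions (f x) s
  have total := sum_card_collisions_le hf
  rw [← sum_add_sum_compl t, ← card_add_card_compl t] at total
  rw [← card_add_card_compl t]
  linarith

end Collisions

lemma card_mul_card_fiber_of_surjective {G M : Type*} [AddGroup G] [Fintype G] [AddMonoid M]
    [Fintype M] [DecidableEq M] (φ : G →+ M) (hφ : Function.Surjective φ) (c : M) :
    Fintype.card M * #{g | φ g = c} = Fintype.card G := by
  have fibers : ∀ d ∈ univ, #{g | φ g = d} = #{g | φ g = c} :=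
    fun d _ ↦ AddMonoidHom.card_fiber_eq_of_mem_range φ (hφ d) (hφ c)
  calc Fintype.card M * #{g | φ g = c} = ∑ d, #{g | φ g = d} := (sum_const_nat fibers).symm
    _ = Fintype.card G := (card_eq_sum_card_fiberwise fun _ _ ↦ mem_univ _).symm

section Distance

/-- The squared distance `‖x - y‖² = ∑ i, (y i - x i)²`. -/
def sqDist {ι R : Type*} [Fintype ι] [CommRing R] (x y : ι → R) : R := (y - x) ⬝ᵥ (y - x)

lemma sqDist_eq_sqDist_iff {ι R : Type*} [Fintype ι] [CommRing R] (x y z : ι → R) :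
    sqDist x y = sqDist x z ↔ ((2 : R) • (y - z)) ⬝ᵥ x = y ⬝ᵥ y - z ⬝ᵥ z := by
  have expand : sqDist x y - sqDist x z =
      y ⬝ᵥ y - z ⬝ᵥ z - ((2 : R) • (y - z)) ⬝ᵥ x := by
    simp only [sqDist, sub_dotProduct, dotProduct_sub, smul_dotProduct, smul_eq_mul,
      dotProduct_comm x]
    ring
  rw [← sub_eq_zero, expand, sub_eq_zero, eq_comm]

variable {ι F : Type*} [Fintype ι] [DecidableEq ι] [Field F] [Fintype F] [DecidableEq F]

lemma card_mul_card_bisector (h2 : (2 : F) ≠ 0) {y z : ι → F} (hyz : y ≠ z) :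
    Fintype.card F * #{x | sqDist x y = sqDist x z} = Fintype.card (ι → F) := by
  let normal : (ι → F) →ₗ[F] F := dotProductBilin F F ((2 : F) • (y - z))
  have normal_ne_zero : normal ≠ 0 := fun h ↦
    smul_ne_zero h2 (sub_ne_zero.mpr hyz) (dotProduct_eq_zero _ fun w ↦ LinearMap.congr_fun h w)
  simp_rw [sqDist_eq_sqDist_iff]
  exact card_mul_card_fiber_of_surjective normal.toAddMonoidHom
    (LinearMap.surjective normal_ne_zero) _

lemma isUniversalHash_sqDist (h2 : (2 : F) ≠ 0) (s : Set (ι → F)) : IsUniversalHash sqDist s :=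
  fun _ _ _ _ hyz ↦ (card_mul_card_bisector h2 hyz).le

lemma exists_mem_card_collisions_sqDist_le (h2 : (2 : F) ≠ 0) {E : Finset (ι → F)}
    (hE : E.Nonempty) :
    ∃ x ∈ E, Fintype.card F * #(collisions (sqDist x) E) ≤
      Fintype.card F * Fintype.card (ι → F) + #E ^ 2 := by
  refine exists_le_of_sum_le hE ?_
  have average := sum_subset_card_collisions_le (isUniversalHash_sqDist h2 (E : Set (ι → F))) E
  rw [← mul_sum, sum_const, smul_eq_mul]
  linarith

lemma exists_mem_card_mul_card_sq_le_card_image_sqDist (h2 : (2 : F) ≠ 0) {E : Finset (ι → F)}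
    (hE : E.Nonempty) :
    ∃ x ∈ E, Fintype.card F * #E ^ 2 ≤
      #(E.image (sqDist x)) * (Fintype.card F * Fintype.card (ι → F) + #E ^ 2) := by
  obtain ⟨x, hx, few_collisions⟩ := exists_mem_card_collisions_sqDist_le h2 hE
  refine ⟨x, hx, ?_⟩
  calc Fintype.card F * #E ^ 2
    _ ≤ Fintype.card F * (#(E.image (sqDist x)) * #(collisions (sqDist x) E)) :=
      Nat.mul_le_mul_left _ (card_sq_le_card_image_mul_card_collisions _ E)
    _ = #(E.image (sqDist x)) * (Fintype.card F * #(collisions (sqDist x) E)) := by ring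
    _ ≤ _ := Nat.mul_le_mul_left _ few_collisions

end Distance

section Plane

variable {F : Type*} [Field F] [Fintype F] [DecidableEq F]

lemma exists_mem_card_lt_two_mul_card_image_sqDist_erase (h2 : (2 : F) ≠ 0)
    {E : Finset (Fin 2 → F)} (hE : 4 * Fintype.card F ^ 3 ≤ #E ^ 2) :
    ∃ x ∈ E, Fintype.card F < 2 * #((E.image (sqDist x)).erase 0) := by
  have : 0 < Fintype.card F := Fintype.card_pos
  have card_plane : Fintype.card (Fin 2 → F) = Fintype.card F ^ 2 := by simp
  have E_card_le : #E ≤ Fintype.card F ^ 2 := card_plane ▸ card_le_univ E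
  have E_card_pos : 0 < #E := Nat.pos_of_ne_zero fun h ↦ by simp [h] at hE
  have four_le_q : 4 ≤ Fintype.card F := by
    refine Nat.le_of_mul_le_mul_right (c := Fintype.card F ^ 3) ?_ (by positivity)
    calc 4 * Fintype.card F ^ 3 ≤ #E ^ 2 := hE
      _ ≤ (Fintype.card F ^ 2) ^ 2 := Nat.pow_le_pow_left E_card_le 2
      _ = Fintype.card F * Fintype.card F ^ 3 := by ring
  obtain ⟨x, hx, hdist⟩ :=
    exists_mem_card_mul_card_sq_le_card_image_sqDist h2 (card_pos.mp E_card_pos)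
  have many_distances : 4 * Fintype.card F ≤ 5 * #(E.image (sqDist x)) := by
    refine Nat.le_of_mul_le_mul_right (c := #E ^ 2) ?_ (by positivity)
    calc 4 * Fintype.card F * #E ^ 2 = 4 * (Fintype.card F * #E ^ 2) := mul_assoc _ _ _
      _ ≤ 4 * (#(E.image (sqDist x)) * (Fintype.card F * Fintype.card F ^ 2 + #E ^ 2)) :=
        Nat.mul_le_mul_left 4 (card_plane ▸ hdist)
      _ = #(E.image (sqDist x)) * (4 * Fintype.card F ^ 3 + 4 * #E ^ 2) := by ring
      _ ≤ #(E.image (sqDist x)) * (#E ^ 2 + 4 * #E ^ 2) := by gcongr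
      _ = 5 * #(E.image (sqDist x)) * #E ^ 2 := by ring
  have erase_bound := pred_card_le_card_erase (s := E.image (sqDist x)) (a := 0)
  exact ⟨x, hx, by omega⟩

end Plane

section Triangles

lemma dotProduct_self_smul {R : Type*} [CommRing R] (u v : Fin 2 → R) :
    (u ⬝ᵥ u) • v = (u ⬝ᵥ v) • u + (of ![u, v]).det • ![-u 1, u 0] := by
  ext i
  fin_cases i <;> simp [dotProduct, Fin.sum_univ_two, det_fin_two] <;> ring

lemma mulVec_dotProduct_mulVec_of_transpose_mul_self {n R : Type*} [Fintype n] [DecidableEq n]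
    [CommRing R] {O : Matrix n n R} (hO : Oᵀ * O = 1) (u v : n → R) :
    O *ᵥ u ⬝ᵥ O *ᵥ v = u ⬝ᵥ v := by
  rw [dotProduct_mulVec, vecMul_mulVec, hO, vecMul_one]

lemma det_of_mulVec_pair {R : Type*} [CommRing R] (O : Matrix (Fin 2) (Fin 2) R)
    (u v : Fin 2 → R) : (of ![O *ᵥ u, O *ᵥ v]).det = O.det * (of ![u, v]).det := by
  have rows : of ![O *ᵥ u, O *ᵥ v] = of ![u, v] * Oᵀ := by
    ext i j
    fin_cases i <;> simp [mul_apply_eq_vecMul, vecMul_transpose]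
  rw [rows, det_mul, det_transpose, mul_comm]

/-- An invariant of triangles `(x, y, z)` under rotations and translations: the entries `u ⬝ᵥ u`
and `u ⬝ᵥ v` of the Gram matrix of the sides `u = y - x` and `v = z - x`, together with the
determinant of these sides. It serves to separate the classes of `triangleRel`. -/
def triangleInvariant {R : Type*} [CommRing R] (t : (Fin 2 → R) × (Fin 2 → R) × (Fin 2 → R)) :
    R × R × R :=
  (sqDist t.1 t.2.1, (t.2.1 - t.1) ⬝ᵥ (t.2.2 - t.1), (of ![t.2.1 - t.1, t.2.2 - t.1]).det)

lemma eq_of_triangleInvariant_eq {F : Type*} [Field F] {x y z z' : Fin 2 → F}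
    (hxy : sqDist x y ≠ 0) (h : triangleInvariant (x, y, z) = triangleInvariant (x, y, z')) :
    z = z' := by
  simp only [triangleInvariant, Prod.mk.injEq, true_and] at h
  obtain ⟨dot_eq, det_eq⟩ := h
  have smul_eq : sqDist x y • (z - x) = sqDist x y • (z' - x) := by
    simp only [sqDist, dotProduct_self_smul, dot_eq, det_eq]
  exact sub_left_injective (smul_right_injective _ hxy smul_eq)

variable {F : Type} [Field F]

/-- The set `T₃(E)` of classes of triangles with vertices in `E`. -/
def triangleClasses (E : Set (Fin 2 → F)) : Set (Quot (triangleRel F)) :=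
  Quot.mk (triangleRel F) '' (E ×ˢ (E ×ˢ E))

lemma triangleRel.triangleInvariant_eq {t t' : (Fin 2 → F) × (Fin 2 → F) × (Fin 2 → F)}
    (h : triangleRel F t t') : triangleInvariant t = triangleInvariant t' := by
  obtain ⟨τ, O, hO, hdet, hx, hy, hz⟩ := h
  simp only [triangleInvariant, sqDist, hx, hy, hz, add_sub_add_right_eq_sub, ← mulVec_sub,
    mulVec_dotProduct_mulVec_of_transpose_mul_self hO, det_of_mulVec_pair, hdet, one_mul]

lemma card_image_sqDist_erase_mul_card_le_ncard_triangleClasses [DecidableEq F]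
    {E : Finset (Fin 2 → F)} {x : Fin 2 → F} (hx : x ∈ E) :
    #((E.image (sqDist x)).erase 0) * #E ≤
      (triangleClasses (E : Set (Fin 2 → F))).ncard := by
  obtain ⟨Y, hYE, sqDist_injOn, hY⟩ :=
    exists_subset_injOn_image_eq_of_surjOn (E : Set (Fin 2 → F)) ((E.image (sqDist x)).erase 0)
      fun s hs ↦ by simpa using mem_of_mem_erase hs
  have sqDist_ne_zero : ∀ y ∈ Y, sqDist x y ≠ 0 := fun y hy ↦
    ne_of_mem_erase (hY ▸ mem_image_of_mem (sqDist x) hy)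
  rw [← hY, card_image_of_injOn sqDist_injOn, ← card_product, ← Set.ncard_coe_finset]
  have classes_finite : (triangleClasses (E : Set (Fin 2 → F))).Finite :=
    (E.finite_toSet.prod (E.finite_toSet.prod E.finite_toSet)).image _
  refine Set.ncard_le_ncard_of_injOn (fun p ↦ Quot.mk (triangleRel F) (x, p)) ?_ ?_
    classes_finite
  · rintro ⟨y, z⟩ h
    obtain ⟨hy, hz⟩ := mem_product.mp h
    exact ⟨(x, y, z), ⟨hx, hYE hy, hz⟩, rfl⟩
  · rintro ⟨y, z⟩ h ⟨y', z'⟩ h' class_eq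
    have invariant_eq : triangleInvariant (x, y, z) = triangleInvariant (x, y', z') :=
      congrArg (Quot.lift triangleInvariant fun _ _ (h : triangleRel F _ _) ↦
        h.triangleInvariant_eq) class_eq
    have hy : y ∈ Y := (mem_product.mp h).1
    obtain rfl : y = y' :=
      sqDist_injOn hy (mem_product.mp h').1 (congrArg Prod.fst invariant_eq)
    rw [eq_of_triangleInvariant_eq (sqDist_ne_zero y hy) invariant_eq]

lemma card_mul_card_lt_two_mul_ncard_triangleClasses [Fintype F] (h2 : (2 : F) ≠ 0)
    {E : Finset (Fin 2 → F)} (hE : 4 * Fintype.card F ^ 3 ≤ #E ^ 2) :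
    Fintype.card F * #E < 2 * (triangleClasses (E : Set (Fin 2 → F))).ncard := by
  classical
  obtain ⟨x, hx, many_distances⟩ := exists_mem_card_lt_two_mul_card_image_sqDist_erase h2 hE
  calc Fintype.card F * #E < 2 * #((E.image (sqDist x)).erase 0) * #E :=
      Nat.mul_lt_mul_of_pos_right many_distances (card_pos.mpr ⟨x, hx⟩)
    _ = 2 * (#((E.image (sqDist x)).erase 0) * #E) := mul_assoc _ _ _
    _ ≤ _ := Nat.mul_le_mul_left 2 (card_image_sqDist_erase_mul_card_le_ncard_triangleClasses hx)

end Triangles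

lemma two_ne_zero_of_odd_card {F : Type*} [Field F] [Fintype F] (h : Odd (Fintype.card F)) :
    (2 : F) ≠ 0 :=
  Ring.two_ne_zero fun hchar ↦ Nat.not_even_iff_odd.mpr h <|
    Nat.even_iff.mpr (FiniteField.even_card_of_char_two hchar)

lemma four_mul_pow_three_le_sq_of_div_sqrt_le {q e ρ : ℝ} (hq : 0 < q) (hρ : 2 / √q ≤ ρ)
    (he : ρ * q ^ 2 ≤ e) : 4 * q ^ 3 ≤ e ^ 2 := by
  calc 4 * q ^ 3 = (2 / √q * q ^ 2) ^ 2 := by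
        rw [mul_pow, div_pow, Real.sq_sqrt hq.le]
        field_simp
        norm_num
    _ ≤ (ρ * q ^ 2) ^ 2 := by gcongr
    _ ≤ e ^ 2 := by
        have : 0 ≤ ρ := le_trans (by positivity) hρ
        gcongr

theorem stmt_0 :
    ∃ C > (0 : ℝ), ∃ c > (0 : ℝ),
      ∀ (F : Type) [Field F] [Fintype F], Odd (Fintype.card F) →
        ∀ (E : Set (Fin 2 → F)) (ρ : ℝ),
          C / Real.sqrt (Fintype.card F) ≤ ρ → ρ ≤ 1 →
          ρ * (Fintype.card F : ℝ) ^ 2 ≤ (E.ncard : ℝ) →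
          c * ρ * (Fintype.card F : ℝ) ^ 3 <
            (Set.ncard (Quot.mk (triangleRel F) '' (E ×ˢ (E ×ˢ E))) : ℝ) := by
  refine ⟨2, two_pos, 1 / 2, one_half_pos, fun F _ _ hodd E ρ hρ _ hE ↦ ?_⟩
  obtain ⟨E, rfl⟩ := E.toFinite.exists_finset_coe
  rw [Set.ncard_coe_finset] at hE
  have q_pos : (0 : ℝ) < Fintype.card F := mod_cast Fintype.card_pos
  have E_large : 4 * Fintype.card F ^ 3 ≤ #E ^ 2 :=
    mod_cast four_mul_pow_three_le_sq_of_div_sqrt_le q_pos hρ hE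
  have triangles : (Fintype.card F * #E : ℝ) <
      2 * (triangleClasses (E : Set (Fin 2 → F))).ncard :=
    mod_cast card_mul_card_lt_two_mul_ncard_triangleClasses (two_ne_zero_of_odd_card hodd) E_large
  calc 1 / 2 * ρ * (Fintype.card F : ℝ) ^ 3
    _ = 1 / 2 * (Fintype.card F * (ρ * (Fintype.card F : ℝ) ^ 2)) := by ring
    _ ≤ 1 / 2 * (Fintype.card F * #E) := by gcongr
    _ < (triangleClasses (E : Set (Fin 2 → F))).ncard := by linarith
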